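/- arXiv:1603.06371 — 2 statements merged into one kernel-verified Lean document; each statement's English description precedes it below -/
import Mathlib

section
/- Let A and B be finite sets with rankings r_A : A → {1, …, |A|} and r_B : B → {1, …, |B|} (both bijections), A nonempty, and let J̃(r_A, r_B) denote the Jaccard index of the extended multisets Ã and B̃. Then J̃(r_A, r_B) = 1 if and only if A = B and r_A = r_B, i.e. the two rankings are identical. -/
/-- The extended multiset of a ranked finite set `A` with ranking `r`:
each element `a ∈ A` occurs with multiplicity `|A| - r a + 1`. -/
def extMultiset {α : Type*} [DecidableEq α] (A : Finset α) (r : α → ℕ) : Multiset α :=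
  A.val.bind (fun a => Multiset.replicate (A.card - r a + 1) a)

/-- The multiset Jaccard index `J(S,T) = |S ∩ T| / |S ∪ T|`. -/
noncomputable def jaccard {α : Type*} [DecidableEq α] (S T : Multiset α) : ℝ :=
  (Multiset.card (S ∩ T) : ℝ) / (Multiset.card (S ∪ T) : ℝ)

section

variable {α : Type*} [DecidableEq α]

theorem card_inter_eq_card_union_iff {S T : Multiset α} :
    (S ∩ T).card = (S ∪ T).card ↔ S = T := by
  have inter_le_union : S ∩ T ≤ S ∪ T := Multiset.inter_le_left.trans Multiset.le_union_left
  calc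
    (S ∩ T).card = (S ∪ T).card ↔ S ∩ T = S ∪ T :=
      ⟨fun h ↦ Multiset.eq_of_le_of_card_le inter_le_union h.ge, congrArg Multiset.card⟩
    _ ↔ S = T := inf_eq_sup

theorem jaccard_eq_one_iff {S T : Multiset α} (hS : S ≠ 0) : jaccard S T = 1 ↔ S = T := by
  have card_union_pos : 0 < (S ∪ T).card :=
    (Multiset.card_pos.2 hS).trans_le (Multiset.card_le_card Multiset.le_union_left)
  rw [jaccard, div_eq_one_iff_eq (Nat.cast_ne_zero.2 card_union_pos.ne'), Nat.cast_inj,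
    card_inter_eq_card_union_iff]

theorem count_extMultiset (A : Finset α) (r : α → ℕ) (a : α) :
    (extMultiset A r).count a = if a ∈ A then A.card - r a + 1 else 0 :=
  calc
    (extMultiset A r).count a = ∑ b ∈ A, (Multiset.replicate (A.card - r b + 1) b).count a :=
      Multiset.count_bind
    _ = if a ∈ A then A.card - r a + 1 else 0 := by
      simp only [Multiset.count_replicate, Finset.sum_ite_eq']

theorem toFinset_extMultiset (A : Finset α) (r : α → ℕ) : (extMultiset A r).toFinset = A := by
  ext a
  simp only [Multiset.mem_toFinset, ← Multiset.count_ne_zero, count_extMultiset, ne_eq,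
    ite_eq_right_iff, Nat.add_one_ne_zero, imp_false, not_not]

theorem extMultiset_ne_zero {A : Finset α} (hA : A.Nonempty) (r : α → ℕ) :
    extMultiset A r ≠ 0 := by
  rwa [← Multiset.toFinset_nonempty, toFinset_extMultiset]

theorem extMultiset_congr {A : Finset α} {r s : α → ℕ} (h : ∀ a ∈ A, r a = s a) :
    extMultiset A r = extMultiset A s :=
  Multiset.bind_congr fun a ha ↦ by rw [h a ha]

theorem eq_of_extMultiset_eq {A : Finset α} {r s : α → ℕ} (h : extMultiset A r = extMultiset A s)
    {a : α} (ha : a ∈ A) (hr : r a ≤ A.card) (hs : s a ≤ A.card) : r a = s a := by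
  have same_count : A.card - r a + 1 = A.card - s a + 1 := by
    simpa only [count_extMultiset, if_pos ha] using congrArg (Multiset.count a) h
  exact (tsub_right_inj hr hs).1 (Nat.succ_injective same_count)

theorem extMultiset_eq_iff {A B : Finset α} {rA rB : α → ℕ} (hA : ∀ a ∈ A, rA a ≤ A.card)
    (hB : ∀ b ∈ B, rB b ≤ B.card) :
    extMultiset A rA = extMultiset B rB ↔ A = B ∧ ∀ a ∈ A, rA a = rB a := by
  constructor
  · intro h
    obtain rfl : A = B := by
      simpa only [toFinset_extMultiset] using congrArg Multiset.toFinset h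
    exact ⟨rfl, fun a ha ↦ eq_of_extMultiset_eq h ha (hA a ha) (hB a ha)⟩
  · rintro ⟨rfl, h⟩
    exact extMultiset_congr h

theorem extJaccard_eq_one_iff_general {A B : Finset α} {rA rB : α → ℕ}
    (hA : ∀ a ∈ A, rA a ≤ A.card) (hB : ∀ b ∈ B, rB b ≤ B.card) (hne : A.Nonempty) :
    jaccard (extMultiset A rA) (extMultiset B rB) = 1 ↔ A = B ∧ ∀ a ∈ A, rA a = rB a :=
  (jaccard_eq_one_iff (extMultiset_ne_zero hne rA)).trans (extMultiset_eq_iff hA hB)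

end

/-- The extended Jaccard index of two rankings equals 1 iff the two ranked sets and
their rankings coincide. -/
theorem extJaccard_eq_one_iff {α : Type*} [DecidableEq α] (A B : Finset α) (rA rB : α → ℕ)
    (hA : Set.BijOn rA ↑A ↑(Finset.Icc 1 A.card))
    (hB : Set.BijOn rB ↑B ↑(Finset.Icc 1 B.card))
    (hne : A.Nonempty) :
    jaccard (extMultiset A rA) (extMultiset B rB) = 1 ↔
      (A = B ∧ ∀ a ∈ A, rA a = rB a) :=
  extJaccard_eq_one_iff_general (fun _ ha ↦ (Finset.mem_Icc.1 (hA.mapsTo ha)).2)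
    (fun _ hb ↦ (Finset.mem_Icc.1 (hB.mapsTo hb)).2) hne
end

section
/- The Jaccard distance on finite multisets satisfies the triangle inequality: for finite multisets S, T, U over a common type, defining d(S, T) = 1 − |S ∩ T| / |S ∪ T| whenever S ∪ T is nonempty (and d(S, T) = 0 when both are empty), one has d(S, U) ≤ d(S, T) + d(T, U). Together with d(S, T) = d(T, S), d(S, T) ≥ 0, and d(S, T) = 0 iff S = T, this makes d a metric on finite multisets. -/
/-- The Jaccard distance on finite multisets: `d(S,T) = 1 - |S ∩ T| / |S ∪ T|`
when `S ∪ T` is nonempty, and `d(∅,∅) = 0`. -/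
noncomputable def jaccardDist {α : Type*} [DecidableEq α] (S T : Multiset α) : ℝ :=
  if S ∪ T = 0 then 0
  else 1 - (Multiset.card (S ∩ T) : ℝ) / (Multiset.card (S ∪ T) : ℝ)

/-! The size `δ(S, T) = |S - T| + |T - S|` of the symmetric difference is a metric on finite
multisets, with `δ(S, ∅) = |S|`. Since `2 |S ∪ T| = |S| + |T| + δ(S, T)` and
`|S ∪ T| - |S ∩ T| = δ(S, T)`, the Jaccard distance is the Steinhaus transform
`2 δ(S, T) / (δ(S, ∅) + δ(T, ∅) + δ(S, T))` of `δ` at `∅`, and the Steinhaus transform of a metric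
at any base point is again a metric. -/

section Steinhaus

variable {X : Type*} [PseudoMetricSpace X] {p x y : X}

/-- The Steinhaus transform, at the base point `p`, of the distance of a pseudometric space.
Where the denominator vanishes, so does the numerator, and `0 / 0 = 0` is the intended value. -/
noncomputable def steinhausDist (p x y : X) : ℝ :=
  2 * dist x y / (dist x p + dist y p + dist x y)

theorem steinhausDist_comm (p x y : X) : steinhausDist p x y = steinhausDist p y x := by
  rw [steinhausDist, steinhausDist, dist_comm x y, add_comm (dist x p)]

theorem steinhausDist_nonneg (p x y : X) : 0 ≤ steinhausDist p x y := by
  unfold steinhausDist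
  positivity

theorem steinhausDist_eq_zero_iff_dist_eq_zero :
    steinhausDist p x y = 0 ↔ dist x y = 0 := by
  refine ⟨fun h => ?_, fun h => by simp [steinhausDist, h]⟩
  rcases div_eq_zero_iff.1 h with hnum | hden
  · linarith
  · linarith [dist_nonneg (x := x) (y := y), dist_nonneg (x := x) (y := p),
      dist_nonneg (x := y) (y := p)]

theorem steinhausDist_le_of_dist_le {r : ℝ} (h : dist x y ≤ r) :
    steinhausDist p x y ≤ 2 * r / (dist x p + dist y p + r) := by
  have hr : 0 ≤ r := dist_nonneg.trans h
  rcases dist_nonneg.eq_or_lt' (a := dist x y) with h0 | hpos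
  · rw [steinhausDist_eq_zero_iff_dist_eq_zero.2 h0]
    positivity
  · have hr_pos : 0 < r := hpos.trans_le h
    rw [steinhausDist, div_le_div_iff₀ (by positivity) (by positivity)]
    have hmul : (dist x p + dist y p) * dist x y ≤ (dist x p + dist y p) * r := by gcongr
    linarith

theorem two_mul_dist_div_le_steinhausDist {M : ℝ}
    (hM : dist x p + dist y p + dist x y ≤ M) : 2 * dist x y / M ≤ steinhausDist p x y := by
  rcases dist_nonneg.eq_or_lt' (a := dist x y) with h0 | hpos
  · simp [steinhausDist, h0]
  · exact div_le_div_of_nonneg_left (by positivity) (by positivity) hM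

theorem steinhausDist_triangle (p x y z : X) :
    steinhausDist p x z ≤ steinhausDist p x y + steinhausDist p y z := by
  set M := dist x p + dist z p + (dist x y + dist y z)
  have hxy : dist x p + dist y p + dist x y ≤ M := by linarith [dist_triangle y z p]
  have hyz : dist y p + dist z p + dist y z ≤ M := by linarith [dist_triangle_left y p x]
  calc steinhausDist p x z
      ≤ 2 * (dist x y + dist y z) / M := steinhausDist_le_of_dist_le (dist_triangle x y z)
    _ = 2 * dist x y / M + 2 * dist y z / M := by rw [mul_add, add_div]
    _ ≤ steinhausDist p x y + steinhausDist p y z :=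
        add_le_add (two_mul_dist_div_le_steinhausDist hxy) (two_mul_dist_div_le_steinhausDist hyz)

theorem steinhausDist_eq_zero_iff {X : Type*} [MetricSpace X] {p x y : X} :
    steinhausDist p x y = 0 ↔ x = y :=
  steinhausDist_eq_zero_iff_dist_eq_zero.trans dist_eq_zero

end Steinhaus

section Jaccard

variable {α : Type*} [DecidableEq α]

theorem card_sub_le_card_sub_add_card_sub (S T U : Multiset α) :
    (S - U).card ≤ (S - T).card + (T - U).card := by
  rw [← Multiset.card_add]
  exact Multiset.card_le_card tsub_le_tsub_add_tsub

/-- The metric on finite multisets given by the size of the symmetric difference, counted with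
multiplicity as `|S - T| + |T - S|`. It is a definition made an instance only locally, since
`Multiset α` carries no canonical metric. -/
noncomputable abbrev symmDiffMetricSpace : MetricSpace (Multiset α) where
  dist S T := (S - T).card + (T - S).card
  dist_self S := by simp
  dist_comm S T := add_comm _ _
  dist_triangle S T U := by
    have hSU := card_sub_le_card_sub_add_card_sub S T U
    have hUS := card_sub_le_card_sub_add_card_sub U T S
    norm_cast
    omega
  eq_of_dist_eq_zero {S T} h := by
    have hcard : (S - T).card = 0 ∧ (T - S).card = 0 := by
      rw [← Nat.add_eq_zero_iff]
      exact_mod_cast h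
    simp only [Multiset.card_eq_zero, tsub_eq_zero_iff_le] at hcard
    exact le_antisymm hcard.1 hcard.2

attribute [local instance] symmDiffMetricSpace

theorem dist_eq_card_sub_add_card_sub (S T : Multiset α) :
    dist S T = (S - T).card + (T - S).card :=
  rfl

theorem dist_zero_eq_card (S : Multiset α) : dist S 0 = S.card := by
  simp [dist_eq_card_sub_add_card_sub]

theorem two_mul_card_union_eq_card_add_card_add_dist (S T : Multiset α) :
    2 * ((S ∪ T).card : ℝ) = S.card + T.card + dist S T := by
  have hST : (S ∪ T).card = (S - T).card + T.card := by
    rw [Multiset.union_def, Multiset.card_add]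
  have hTS : (S ∪ T).card = (T - S).card + S.card := by
    rw [Multiset.union_comm, Multiset.union_def, Multiset.card_add]
  rw [dist_eq_card_sub_add_card_sub]
  norm_cast
  omega

theorem card_union_sub_card_inter_eq_dist (S T : Multiset α) :
    ((S ∪ T).card : ℝ) - (S ∩ T).card = dist S T := by
  have hadd : ((S ∪ T).card : ℝ) + (S ∩ T).card = S.card + T.card := by
    norm_cast
    rw [← Multiset.card_add, Multiset.union_add_inter, Multiset.card_add]
  linarith [two_mul_card_union_eq_card_add_card_add_dist S T]

theorem jaccardDist_eq_card_sub_div (S T : Multiset α) :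
    jaccardDist S T = ((S ∪ T).card - (S ∩ T).card : ℝ) / (S ∪ T).card := by
  unfold jaccardDist
  split_ifs with h
  · simp [h]
  · have hcard : ((S ∪ T).card : ℝ) ≠ 0 := by simpa using h
    rw [sub_div, div_self hcard]

theorem jaccardDist_eq_steinhausDist (S T : Multiset α) :
    jaccardDist S T = steinhausDist 0 S T := by
  rw [jaccardDist_eq_card_sub_div, card_union_sub_card_inter_eq_dist, steinhausDist,
    dist_zero_eq_card, dist_zero_eq_card, ← two_mul_card_union_eq_card_add_card_add_dist,
    mul_div_mul_left _ _ two_ne_zero]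

theorem jaccardDist_triangle (S T U : Multiset α) :
    jaccardDist S U ≤ jaccardDist S T + jaccardDist T U := by
  simpa only [jaccardDist_eq_steinhausDist] using steinhausDist_triangle 0 S T U

theorem jaccardDist_comm (S T : Multiset α) : jaccardDist S T = jaccardDist T S := by
  simpa only [jaccardDist_eq_steinhausDist] using steinhausDist_comm 0 S T

theorem jaccardDist_nonneg (S T : Multiset α) : 0 ≤ jaccardDist S T := by
  simpa only [jaccardDist_eq_steinhausDist] using steinhausDist_nonneg 0 S T

theorem jaccardDist_eq_zero_iff {S T : Multiset α} : jaccardDist S T = 0 ↔ S = T := by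
  rw [jaccardDist_eq_steinhausDist, steinhausDist_eq_zero_iff]

end Jaccard

/-- The Jaccard distance is a metric on finite multisets: it satisfies the triangle
inequality, is symmetric, is nonnegative, and vanishes exactly on equal multisets. -/
theorem jaccardDist_is_metric {α : Type*} [DecidableEq α] (S T U : Multiset α) :
    jaccardDist S U ≤ jaccardDist S T + jaccardDist T U ∧
    jaccardDist S T = jaccardDist T S ∧
    0 ≤ jaccardDist S T ∧
    (jaccardDist S T = 0 ↔ S = T) := by
  exact ⟨jaccardDist_triangle S T U, jaccardDist_comm S T, jaccardDist_nonneg S T,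
    jaccardDist_eq_zero_iff⟩
end
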